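/- For every graph G with maximum degree Δ > 1, both the closed conflict-free chromatic index χ'_ccf(G) and the open conflict-free chromatic index χ'_ocf(G) are at most (1+o(1)) log₂ Δ; explicitly, for every ε > 0 there exists Δ_ε such that if Δ ≥ Δ_ε then χ'_ccf(G) ≤ (1+ε) log₂ Δ and χ'_ocf(G) ≤ (1+ε) log₂ Δ. -/

import Mathlib

open SimpleGraph

/-- The closed neighbourhood of an edge `e`: all edges of `G` sharing a vertex with `e`. -/
def ECN {V : Type*} (G : SimpleGraph V) (e : Sym2 V) : Set (Sym2 V) :=
  {f | f ∈ G.edgeSet ∧ ∃ w, w ∈ f ∧ w ∈ e}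

/-- The open neighbourhood of an edge `e`. -/
def EON {V : Type*} (G : SimpleGraph V) (e : Sym2 V) : Set (Sym2 V) :=
  ECN G e \ {e}

/-- `c` is a closed conflict-free edge colouring of `G` with `k` colours. -/
def ClosedCF {V : Type*} (G : SimpleGraph V) (c : Sym2 V → ℕ) (k : ℕ) : Prop :=
  (∀ e ∈ G.edgeSet, c e < k) ∧
  ∀ e ∈ G.edgeSet, ∃ α, ∃! f, f ∈ ECN G e ∧ c f = α

/-- `c` is an open conflict-free edge colouring of `G` with `k` colours. -/
def OpenCF {V : Type*} (G : SimpleGraph V) (c : Sym2 V → ℕ) (k : ℕ) : Prop :=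
  (∀ e ∈ G.edgeSet, c e < k) ∧
  ∀ e ∈ G.edgeSet, (EON G e).Nonempty → ∃ α, ∃! f, f ∈ EON G e ∧ c f = α

/-- `c` is a conflict-free edge colouring of `G` with `k` colours:
every non-isolated edge `e` has an edge `e'` in its open neighbourhood whose
colour appears on no other edge of the closed neighbourhood of `e`. -/
def ConflictFree {V : Type*} (G : SimpleGraph V) (c : Sym2 V → ℕ) (k : ℕ) : Prop :=
  (∀ e ∈ G.edgeSet, c e < k) ∧
  ∀ e ∈ G.edgeSet, (EON G e).Nonempty →
    ∃ e' ∈ EON G e, ∀ f ∈ ECN G e, c f = c e' → f = e'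

/-- A partial edge colouring of `G` with `k` colours. -/
def PartialColouring {V : Type*} (G : SimpleGraph V) (c : Sym2 V → Option ℕ) (k : ℕ) : Prop :=
  ∀ e α, c e = some α → e ∈ G.edgeSet ∧ α < k

/-- An edge `e` is satisfied by the partial colouring `c`. -/
def SatisfiedP {V : Type*} (G : SimpleGraph V) (c : Sym2 V → Option ℕ) (e : Sym2 V) : Prop :=
  ∃ e' ∈ EON G e, ∃ α, c e' = some α ∧ ∀ f ∈ ECN G e, c f = some α → f = e'

/-- Vertex `v` is incident with a uniquely coloured edge under partial colouring `c`. -/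
def UniqueAt {V : Type*} (G : SimpleGraph V) (c : Sym2 V → Option ℕ) (v : V) : Prop :=
  ∃ e ∈ G.incidenceSet v, ∃ α, c e = some α ∧
    ∀ f ∈ G.incidenceSet v, c f = some α → f = e

/-- `G` is `k`-degenerate: there is a vertex ordering in which every vertex
has at most `k` earlier neighbours. -/
def IsDegenerate {V : Type*} (G : SimpleGraph V) (k : ℕ) : Prop :=
  ∃ f : V ↪ ℕ, ∀ v, {u ∈ G.neighborSet v | f u < f v}.ncard ≤ k

/-- The open conflict-free chromatic index. -/
noncomputable def ocfIndex {V : Type*} (G : SimpleGraph V) : ℕ :=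
  sInf {k | ∃ c, OpenCF G c k}

/-- The closed conflict-free chromatic index. -/
noncomputable def ccfIndex {V : Type*} (G : SimpleGraph V) : ℕ :=
  sInf {k | ∃ c, ClosedCF G c k}

/-- The conflict-free chromatic index. -/
noncomputable def cfIndex {V : Type*} (G : SimpleGraph V) : ℕ :=
  sInf {k | ∃ c, ConflictFree G c k}

/-!
Write `L` for `log₂ Δ` rounded up and let `t` be of order `log L`. Give the edges indices by a
maximal partial proper edge colouring with `k = L + O(t ^ 2)` colours, in which additionally any two
edges at adjacent vertices of degree less than `t` have different indices. A vertex is low if fewer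
than `t` indexed edges meet it, and an edge is low if both of its ends are.

Drop the indices of the low edges and retain each remaining index with probability `1 / 2`. The
index of a retained edge is used on at most two edges near a given edge `e`, one per end; so if `e`
is unsatisfied, then whether a given edge of a rainbow set near `e` is retained is determined by the
choices outside this set. Hence `e` is unsatisfied with probability at most `2 ^ (-m)`, where `m` is
the number of indices near `e`. By maximality `m ≥ L + t` if `e` is not low and has no index, and
`m ≥ t - 1` for every edge that is not low. As only `k` indexed edges meet a vertex, the lopsided
local lemma satisfies all edges that are not low.

Low edges have an index, so at most `t` of them meet a vertex. A strong edge colouring of the low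
edges with `4 * t ^ 2 + 1` new colours satisfies each low edge next to another one, and one more new
colour, put on an edge next to each remaining unsatisfied low edge, satisfies those. The uncoloured
edges share a last colour, and `t ^ 2 = o(L)`.
-/

open Finset MeasureTheory

section LocalLemma

variable {Ω ι : Type*} [MeasurableSpace Ω] {μ : Measure Ω} [IsFiniteMeasure μ]
  {A : ι → Set Ω} {Γ : ι → Finset ι} {p : ι → ℝ} {s : Finset ι}

theorem measureReal_avoid_le_add_sum [DecidableEq ι] (μ : Measure Ω) [IsFiniteMeasure μ]
    (A : ι → Set Ω) (T U : Finset ι) :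
    μ.real {ω | ∀ j ∈ T, ω ∉ A j} ≤ μ.real {ω | ∀ j ∈ T ∪ U, ω ∉ A j} +
      ∑ j ∈ U, μ.real (A j ∩ {ω | ∀ l ∈ T, ω ∉ A l}) := by
  have hcover : {ω | ∀ j ∈ T, ω ∉ A j} ⊆
      {ω | ∀ j ∈ T ∪ U, ω ∉ A j} ∪ ⋃ j ∈ U, A j ∩ {ω | ∀ l ∈ T, ω ∉ A l} := by
    intro ω hω
    simp only [Set.mem_union, Set.mem_iUnion, Set.mem_inter_iff, Set.mem_ofPred_eq, mem_union,
      exists_prop] at hω ⊢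
    grind
  calc _ ≤ _ := measureReal_mono hcover
    _ ≤ _ := measureReal_union_le _ _
    _ ≤ _ := by gcongr; exact measureReal_biUnion_finset_le _ _

theorem measureReal_inter_avoid_le (hp : ∀ i, 0 ≤ p i) (hsum : ∀ i ∈ s, ∑ j ∈ Γ i, p j ≤ 1 / 4)
    (hind : ∀ i ∈ s, ∀ T ⊆ s, Disjoint T (Γ i) →
      μ.real (A i ∩ {ω | ∀ j ∈ T, ω ∉ A j}) ≤ p i * μ.real {ω | ∀ j ∈ T, ω ∉ A j})
    {T : Finset ι} (hT : T ⊆ s) {i : ι} (hi : i ∈ s) :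
    μ.real (A i ∩ {ω | ∀ j ∈ T, ω ∉ A j}) ≤ 2 * p i * μ.real {ω | ∀ j ∈ T, ω ∉ A j} := by
  classical
  induction T using Finset.strongInduction generalizing i with
  | H T ih =>
  set far := T.filter (· ∉ Γ i)
  set near := T.filter (· ∈ Γ i)
  have hfarT : far ⊆ T := filter_subset _ _
  have hunion : far ∪ near = T := by rw [union_comm]; exact filter_union_filter_not_eq _ T
  have hfar : μ.real (A i ∩ {ω | ∀ j ∈ far, ω ∉ A j}) ≤
      p i * μ.real {ω | ∀ j ∈ far, ω ∉ A j} :=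
    hind i hi far (hfarT.trans hT) (disjoint_left.2 fun _ hj => (mem_filter.1 hj).2)
  have hnear : ∑ j ∈ near, μ.real (A j ∩ {ω | ∀ l ∈ far, ω ∉ A l}) ≤
      1 / 2 * μ.real {ω | ∀ j ∈ far, ω ∉ A j} := by
    calc _ ≤ ∑ j ∈ near, 2 * p j * μ.real {ω | ∀ l ∈ far, ω ∉ A l} := by
          refine sum_le_sum fun j hj => ?_
          obtain ⟨hjT, hjΓ⟩ := mem_filter.1 hj
          have hlt : far ⊂ T := filter_ssubset.2 ⟨j, hjT, not_not.2 hjΓ⟩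
          exact ih far hlt (hfarT.trans hT) (hT hjT)
      _ = 2 * (∑ j ∈ near, p j) * μ.real {ω | ∀ l ∈ far, ω ∉ A l} := by
          rw [mul_sum, sum_mul]
      _ ≤ 2 * (1 / 4) * μ.real {ω | ∀ l ∈ far, ω ∉ A l} := by
          gcongr
          refine (sum_le_sum_of_subset_of_nonneg (fun j hj => ?_) fun j _ _ => hp j).trans
            (hsum i hi)
          exact (mem_filter.1 hj).2
      _ = _ := by ring
  have hhalf : μ.real {ω | ∀ j ∈ far, ω ∉ A j} ≤ 2 * μ.real {ω | ∀ j ∈ T, ω ∉ A j} := by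
    have hcover := measureReal_avoid_le_add_sum μ A far near
    rw [hunion] at hcover
    linarith
  calc μ.real (A i ∩ {ω | ∀ j ∈ T, ω ∉ A j})
      ≤ μ.real (A i ∩ {ω | ∀ j ∈ far, ω ∉ A j}) :=
        measureReal_mono (Set.inter_subset_inter_right _ fun ω hω j hj => hω j (hfarT hj))
    _ ≤ p i * (2 * μ.real {ω | ∀ j ∈ T, ω ∉ A j}) :=
        hfar.trans (mul_le_mul_of_nonneg_left hhalf (hp i))
    _ = _ := by ring

/- The Lovász local lemma, in the lopsided form with weights. -/
theorem exists_forall_notMem_of_sum_le [NeZero μ] (hp : ∀ i, 0 ≤ p i) (hp' : ∀ i ∈ s, p i ≤ 1 / 4)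
    (hsum : ∀ i ∈ s, ∑ j ∈ Γ i, p j ≤ 1 / 4)
    (hind : ∀ i ∈ s, ∀ T ⊆ s, Disjoint T (Γ i) →
      μ.real (A i ∩ {ω | ∀ j ∈ T, ω ∉ A j}) ≤ p i * μ.real {ω | ∀ j ∈ T, ω ∉ A j}) :
    ∃ ω, ∀ i ∈ s, ω ∉ A i := by
  classical
  suffices hpos : ∀ T ⊆ s, 0 < μ.real {ω | ∀ j ∈ T, ω ∉ A j} from
    nonempty_of_measureReal_ne_zero (hpos s Subset.rfl).ne'
  intro T hT
  induction T using Finset.induction_on with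
  | empty => simp [measureReal_def, ENNReal.toReal_pos_iff, NeZero.ne μ]
  | insert i T _ ih =>
    obtain ⟨hi, hTs⟩ := insert_subset_iff.1 hT
    have hcond := measureReal_inter_avoid_le hp hsum hind hTs hi
    have hcover := measureReal_avoid_le_add_sum μ A T {i}
    rw [sum_singleton, union_comm, ← insert_eq] at hcover
    nlinarith [ih hTs, hp' i hi]

end LocalLemma

section PartialColouringExistence

/-- A partial colouring of `D` with colours `0, …, k - 1` in which `R`-related elements never share
a colour and no uncoloured element of `D` can be given a colour. -/
structure IsMaximalPartialColouring {α : Type*} (D : Set α) (R : α → α → Prop) (k : ℕ)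
    (c : α → Option ℕ) : Prop where
  mem_and_lt : ∀ a i, c a = some i → a ∈ D ∧ i < k
  eq_of_rel : ∀ a b i, R a b → c a = some i → c b = some i → a = b
  exists_rel : ∀ a ∈ D, c a = none → ∀ i < k, ∃ b, R a b ∧ c b = some i

theorem exists_isMaximalPartialColouring {α : Type*} [Finite α] (D : Set α) {R : α → α → Prop}
    (hR : ∀ ⦃a b⦄, R a b → R b a) (k : ℕ) : ∃ c, IsMaximalPartialColouring D R k c := by
  classical
  let P (c : α → Option ℕ) : Prop := (∀ a i, c a = some i → a ∈ D ∧ i < k) ∧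
    ∀ a b i, R a b → c a = some i → c b = some i → a = b
  obtain ⟨c, ⟨hmem, heq⟩, hmax⟩ := exists_maximalFor_of_wellFoundedGT P
    (fun c => {a | c a ≠ none}) ⟨fun _ => none, by simp [P]⟩
  refine ⟨c, hmem, heq, fun a ha hca i hi => ?_⟩
  by_contra! hfree
  have hP : P (Function.update c a (some i)) := by
    constructor <;> grind [Function.update_apply]
  have hle : {b | c b ≠ none} ≤ {b | Function.update c a (some i) b ≠ none} := by
    intro b hb
    by_cases hba : b = a <;> simp_all
  exact hmax hP hle (show Function.update c a (some i) a ≠ none by simp) hca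

theorem le_card_of_forall_exists_eq_some {α : Type*} {k : ℕ} {F : Finset α} {c : α → Option ℕ}
    (h : ∀ i < k, ∃ a ∈ F, c a = some i) : k ≤ #F := by
  classical
  have hsub : (range k).map Function.Embedding.some ⊆ F.image c := fun o ho => by
    obtain ⟨i, hi, rfl⟩ := mem_map.1 ho
    exact mem_image.2 (h i (mem_range.1 hi))
  simpa using (card_le_card hsub).trans card_image_le

theorem IsMaximalPartialColouring.ne_none {α : Type*} {D : Set α} {R : α → α → Prop} {k : ℕ}
    {c : α → Option ℕ} (hc : IsMaximalPartialColouring D R k c) {a : α} (ha : a ∈ D)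
    {F : Finset α} (hF : ∀ b, R a b → c b ≠ none → b ∈ F) (hcard : #F < k) : c a ≠ none := by
  intro hca
  refine hcard.not_ge (le_card_of_forall_exists_eq_some (c := c) fun i hi => ?_)
  obtain ⟨b, hab, hb⟩ := hc.exists_rel a ha hca i hi
  exact ⟨b, hF b hab (by simp [hb]), hb⟩

end PartialColouringExistence

section Retention

theorem ncard_mul_two_pow_card_le {α : Type*} [Finite α] [DecidableEq α] {𝒜 ℬ : Set (Finset α)}
    {Y : Finset α} (hsub : 𝒜 ⊆ ℬ) (hinj : 𝒜.InjOn (· \ Y))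
    (hℬ : ∀ ω ∈ ℬ, ∀ ω', ω' \ Y = ω \ Y → ω' ∈ ℬ) : 𝒜.ncard * 2 ^ #Y ≤ ℬ.ncard := by
  rw [← card_powerset, ← Set.ncard_coe_finset, ← Set.ncard_prod]
  have hsdiff (ω T : Finset α) (hT : T ⊆ Y) : (ω \ Y ∪ T) \ Y = ω \ Y := by grind
  have hinter (ω T : Finset α) (hT : T ⊆ Y) : (ω \ Y ∪ T) ∩ Y = T := by grind
  refine Set.ncard_le_ncard_of_injOn (fun q => q.1 \ Y ∪ q.2) ?_ ?_ (Set.toFinite ℬ)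
  · rintro ⟨ω, T⟩ ⟨hω, hT⟩
    exact hℬ ω (hsub hω) _ (hsdiff ω T (mem_powerset.1 hT))
  · rintro ⟨ω, T⟩ ⟨hω, hT⟩ ⟨ω', T'⟩ ⟨hω', hT'⟩ (heq : ω \ Y ∪ T = ω' \ Y ∪ T')
    rw [SetLike.mem_coe, mem_powerset] at hT hT'
    refine Prod.ext (hinj hω hω' ?_) ?_
    · simpa only [hsdiff, hT, hT'] using congrArg (· \ Y) heq
    · simpa only [hinter, hT, hT'] using congrArg (· ∩ Y) heq

/-- Two unordered pairs share an element; for two edges of a graph, being equal or adjacent. -/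
def Touch {V : Type*} (e f : Sym2 V) : Prop := ∃ w, w ∈ e ∧ w ∈ f

variable {V : Type*} {G : SimpleGraph V} {e f g h : Sym2 V}

theorem Touch.symm : Touch e f → Touch f e := fun ⟨w, he, hf⟩ => ⟨w, hf, he⟩

theorem touch_mk_right {x y : V} : Touch e s(x, y) ↔ x ∈ e ∨ y ∈ e := by
  simp [Touch, and_or_left, exists_or]

theorem card_le_two_mul_of_forall_exists_mem {β : Type*} {F : Finset β} {s : V → Finset β} {n : ℕ}
    (hF : ∀ b ∈ F, ∃ v ∈ e, b ∈ s v) (hs : ∀ v ∈ e, #(s v) ≤ n) : #F ≤ 2 * n := by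
  classical
  have hsub : F ⊆ e.toFinset.biUnion s := fun b hb => by simpa using hF b hb
  calc #F ≤ #e.toFinset * n :=
        (card_le_card hsub).trans (card_biUnion_le_card_mul _ _ _ (by simpa using hs))
    _ ≤ 2 * n := by
        gcongr
        rw [e.card_toFinset]
        split <;> omega

open Classical in
/-- The edges in `F` at the vertex `v`. -/
noncomputable def edgesAt (F : Finset (Sym2 V)) (v : V) : Finset (Sym2 V) := {e ∈ F | v ∈ e}

open Classical in
/-- The edges in `H` that touch some edge in `C` touching `e`. -/
noncomputable def edgesVia (C H : Finset (Sym2 V)) (e : Sym2 V) : Finset (Sym2 V) :=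
  {f ∈ H | ∃ g ∈ C, Touch g e ∧ Touch g f}

theorem mem_edgesAt {F : Finset (Sym2 V)} {v : V} : e ∈ edgesAt F v ↔ e ∈ F ∧ v ∈ e := by
  simp [edgesAt]

theorem mem_edgesVia {C H : Finset (Sym2 V)} :
    f ∈ edgesVia C H e ↔ f ∈ H ∧ ∃ g ∈ C, Touch g e ∧ Touch g f := by
  simp [edgesVia]

theorem card_edgesVia_le {C H : Finset (Sym2 V)} {n N : ℕ} (hn : ∀ v, #(edgesAt C v) ≤ n)
    (hN : ∀ v, #(edgesAt H v) ≤ N) (e : Sym2 V) : #(edgesVia C H e) ≤ 2 * n * (2 * N) := by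
  classical
  have hnear : #{g ∈ C | Touch g e} ≤ 2 * n := by
    refine card_le_two_mul_of_forall_exists_mem (e := e) (fun g hg => ?_) fun v _ => hn v
    obtain ⟨hgC, w, hwg, hwe⟩ := mem_filter.1 hg
    exact ⟨w, hwe, mem_edgesAt.2 ⟨hgC, hwg⟩⟩
  have hfar (g : Sym2 V) : #{f ∈ H | Touch g f} ≤ 2 * N := by
    refine card_le_two_mul_of_forall_exists_mem (e := g) (fun f hf => ?_) fun v _ => hN v
    obtain ⟨hfH, w, hwg, hwf⟩ := mem_filter.1 hf
    exact ⟨w, hwg, mem_edgesAt.2 ⟨hfH, hwf⟩⟩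
  have hsub : edgesVia C H e ⊆ {g ∈ C | Touch g e}.biUnion fun g => {f ∈ H | Touch g f} := by
    intro f hf
    obtain ⟨hfH, g, hgC, hge, hgf⟩ := mem_edgesVia.1 hf
    exact mem_biUnion.2 ⟨g, mem_filter.2 ⟨hgC, hge⟩, mem_filter.2 ⟨hfH, hgf⟩⟩
  calc _ ≤ #{g ∈ C | Touch g e} * (2 * N) :=
        (card_le_card hsub).trans (card_biUnion_le_card_mul _ _ _ fun g _ => hfar g)
    _ ≤ _ := by gcongr

/-- A partial edge colouring is proper if touching edges never share a colour. -/
def IsProper (c : Sym2 V → Option ℕ) : Prop :=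
  ∀ e f α, Touch e f → c e = some α → c f = some α → e = f

/-- The partial colouring obtained from `c` by uncolouring all edges outside `S`. -/
noncomputable def retain (c : Sym2 V → Option ℕ) (S : Set (Sym2 V)) (e : Sym2 V) : Option ℕ :=
  open Classical in if e ∈ S then c e else none

variable {c c' : Sym2 V → Option ℕ} {S : Set (Sym2 V)} {k α : ℕ}

theorem retain_eq_some : retain c S e = some α ↔ e ∈ S ∧ c e = some α := by
  simp [retain]

protected theorem PartialColouring.retain (hc : PartialColouring G c k) (S : Set (Sym2 V)) :
    PartialColouring G (retain c S) k :=
  fun e α he => hc e α (retain_eq_some.1 he).2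

protected theorem IsProper.retain (hc : IsProper c) (S : Set (Sym2 V)) : IsProper (retain c S) :=
  fun e f α hef he hf => hc e f α hef (retain_eq_some.1 he).2 (retain_eq_some.1 hf).2

theorem SatisfiedP.congr (hcc' : ∀ f ∈ ECN G e, c f = c' f) (h : SatisfiedP G c e) :
    SatisfiedP G c' e := by
  obtain ⟨f, hf, α, hfα, huniq⟩ := h
  exact ⟨f, hf, α, hcc' f hf.1 ▸ hfα, fun g hg hgα => huniq g hg ((hcc' g hg).trans hgα)⟩

/- Each of the two ends of `e` meets at most one edge of a given colour. -/
theorem IsProper.eq_of_ne_of_ne (hc : IsProper c) (hf : Touch f e) (hg : Touch g e)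
    (hh : Touch h e) (hfα : c f = some α) (hgα : c g = some α) (hhα : c h = some α)
    (hfg : f ≠ g) (hfh : f ≠ h) : g = h := by
  induction e with
  | _ x y =>
  have hcommon {a b : Sym2 V} {v : V} (hav : v ∈ a) (hbv : v ∈ b) (ha : c a = some α)
      (hb : c b = some α) : a = b := hc a b α ⟨v, hav, hbv⟩ ha hb
  rw [touch_mk_right] at hf hg hh
  grind

theorem IsProper.mem_iff_of_not_satisfiedP (hc : IsProper c) {ω Y : Finset (Sym2 V)}
    [DecidableEq V] (hY : ↑Y ⊆ EON G e) (hinj : Set.InjOn c Y)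
    (hω : ¬ SatisfiedP G (retain c ω) e) (hf : f ∈ Y) (hfα : c f = some α) :
    f ∈ ω ↔ ∃ g ∈ ω \ Y, g ∈ ECN G e ∧ c g = some α := by
  obtain ⟨⟨-, hfe⟩, hne⟩ := hY hf
  constructor
  · intro hfω
    by_contra! hno
    refine hω ⟨f, hY hf, α, retain_eq_some.2 ⟨hfω, hfα⟩, fun g hg hgα => ?_⟩
    obtain ⟨hgω, hgα⟩ := retain_eq_some.1 hgα
    by_contra hgf
    refine hno g (mem_sdiff.2 ⟨hgω, fun hgY => hgf ?_⟩) hg hgα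
    exact hinj hgY hf (hgα.trans hfα.symm)
  · rintro ⟨g, hg, ⟨hgG, hge⟩, hgα⟩
    obtain ⟨hgω, hgY⟩ := mem_sdiff.1 hg
    by_contra hfω
    refine hω ⟨g, ⟨⟨hgG, hge⟩, ?_⟩, α, retain_eq_some.2 ⟨hgω, hgα⟩, fun h hh hhα => ?_⟩
    · rintro rfl
      exact hne (hc f g α hfe hfα hgα)
    · obtain ⟨hhω, hhα⟩ := retain_eq_some.1 hhα
      refine hc.eq_of_ne_of_ne hfe hh.2 hge hfα hhα hgα ?_ ?_
      · exact fun hfh => hfω (hfh ▸ hhω)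
      · exact fun hfg => hgY (hfg ▸ hf)

/-- The sets `ω` of edges such that keeping only the colours of the edges in `ω` leaves `e`
unsatisfied. -/
def unsatisfied (G : SimpleGraph V) (c : Sym2 V → Option ℕ) (e : Sym2 V) :
    Set (Finset (Sym2 V)) :=
  {ω | ¬ SatisfiedP G (retain c ω) e}

theorem notMem_unsatisfied {ω : Finset (Sym2 V)} :
    ω ∉ unsatisfied G c e ↔ SatisfiedP G (retain c ω) e := not_not

theorem IsProper.injOn_sdiff_unsatisfied (hc : IsProper c) {Y : Finset (Sym2 V)}
    [DecidableEq V] (hY : ↑Y ⊆ EON G e) (hinj : Set.InjOn c Y) (hcol : ∀ f ∈ Y, c f ≠ none) :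
    (unsatisfied G c e).InjOn (· \ Y) := by
  intro ω hω ω' hω' (heq : ω \ Y = ω' \ Y)
  ext f
  by_cases hf : f ∈ Y
  · obtain ⟨α, hα⟩ := Option.ne_none_iff_exists'.1 (hcol f hf)
    rw [hc.mem_iff_of_not_satisfiedP hY hinj hω hf hα, heq,
      hc.mem_iff_of_not_satisfiedP hY hinj hω' hf hα]
  · simpa [hf] using Finset.ext_iff.1 heq f

variable [Fintype V]

open Classical in
/-- The colours that the partial colouring `c` uses on the open neighbourhood of `e`. -/
noncomputable def neighbourColours (G : SimpleGraph V) (c : Sym2 V → Option ℕ) (e : Sym2 V) :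
    Finset ℕ :=
  (({f | f ∈ EON G e} : Finset (Sym2 V)).image c).eraseNone

theorem mem_neighbourColours : α ∈ neighbourColours G c e ↔ ∃ f ∈ EON G e, c f = some α := by
  simp [neighbourColours]

theorem exists_rainbow_subset_EON (G : SimpleGraph V) (c : Sym2 V → Option ℕ) (e : Sym2 V) :
    ∃ Y : Finset (Sym2 V), ↑Y ⊆ EON G e ∧ Set.InjOn c Y ∧ (∀ f ∈ Y, c f ≠ none) ∧
      #Y = #(neighbourColours G c e) := by
  classical
  have hsurj : (EON G e).SurjOn c ((neighbourColours G c e).map Function.Embedding.some) := by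
    intro o ho
    obtain ⟨α, hα, rfl⟩ := mem_map.1 ho
    exact mem_neighbourColours.1 hα
  obtain ⟨Y, hY, hinj, himage⟩ := exists_subset_injOn_image_eq_of_surjOn _ _ hsurj
  refine ⟨Y, hY, hinj, fun f hf => ?_, ?_⟩
  · obtain ⟨α, -, hα⟩ := mem_map.1 (himage ▸ mem_image_of_mem c hf)
    simp [← hα]
  · rw [← card_image_of_injOn hinj, himage, card_map]

theorem IsProper.ncard_unsatisfied_inter_mul_two_pow_le (hc : IsProper c) {m : ℕ}
    (hm : m ≤ #(neighbourColours G c e)) {T : Finset (Sym2 V)}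
    (hT : ∀ f ∈ T, ∀ g, c g ≠ none → Touch g e → ¬ Touch g f) :
    (unsatisfied G c e ∩ {ω | ∀ f ∈ T, ω ∉ unsatisfied G c f}).ncard * 2 ^ m ≤
      {ω | ∀ f ∈ T, ω ∉ unsatisfied G c f}.ncard := by
  classical
  obtain ⟨Y, hY, hinj, hcol, hcard⟩ := exists_rainbow_subset_EON G c e
  calc _ ≤ (unsatisfied G c e ∩ {ω | ∀ f ∈ T, ω ∉ unsatisfied G c f}).ncard * 2 ^ #Y := by
        gcongr
        · exact one_le_two
        · exact hm.trans hcard.ge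
    _ ≤ _ := ncard_mul_two_pow_card_le Set.inter_subset_right
        ((hc.injOn_sdiff_unsatisfied hY hinj hcol).mono Set.inter_subset_left) ?_
  intro ω hω ω' hωω' f hf
  refine notMem_unsatisfied.2 ((notMem_unsatisfied.1 (hω f hf)).congr fun g hg => ?_)
  have hgY : g ∈ Y → c g = none := fun hgY => by
    by_contra hne
    exact hT f hf g hne (hY hgY).1.2 hg.2
  have hgω : g ∉ Y → (g ∈ ω' ↔ g ∈ ω) := fun hgY => by
    simpa [hgY] using Finset.ext_iff.1 hωω' g
  by_cases hg' : g ∈ Y <;> simp [retain, hgY, hgω, hg']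

open Classical in
/-- The edges coloured by the partial colouring `c`. -/
noncomputable def coloured (c : Sym2 V → Option ℕ) : Finset (Sym2 V) := {e | c e ≠ none}

/-- The coloured edges at the vertex `v`. -/
noncomputable def colouredAt (c : Sym2 V → Option ℕ) (v : V) : Finset (Sym2 V) :=
  edgesAt (coloured c) v

theorem mem_coloured : e ∈ coloured c ↔ c e ≠ none := by
  simp [coloured]

theorem mem_colouredAt {v : V} : e ∈ colouredAt c v ↔ c e ≠ none ∧ v ∈ e := by
  rw [colouredAt, mem_edgesAt, mem_coloured]

theorem IsProper.injOn_colouredAt (hc : IsProper c) (v : V) :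
    Set.InjOn c (colouredAt c v) := by
  intro e he f hf hef
  obtain ⟨hce, hve⟩ := mem_colouredAt.1 he
  obtain ⟨α, hα⟩ := Option.ne_none_iff_exists'.1 hce
  exact hc e f α ⟨v, hve, (mem_colouredAt.1 hf).2⟩ hα (hef ▸ hα)

theorem IsProper.card_colouredAt_le (hc : IsProper c) (hk : PartialColouring G c k) (v : V) :
    #(colouredAt c v) ≤ k := by
  have hmaps : Set.MapsTo c (colouredAt c v) ((range k).map Function.Embedding.some) := by
    intro e he
    obtain ⟨α, hα⟩ := Option.ne_none_iff_exists'.1 (mem_colouredAt.1 he).1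
    simp [hα, (hk e α hα).2]
  simpa using card_le_card_of_injOn c hmaps (hc.injOn_colouredAt v)

/-- A bound on the probability that `e` is unsatisfied under random retention. -/
noncomputable def unsatisfiedBound (c : Sym2 V → Option ℕ) (m n : ℕ) (e : Sym2 V) : ℝ :=
  if c e = none then (1 / 2) ^ m else (1 / 2) ^ n

theorem IsProper.sum_unsatisfiedBound_edgesVia_le (hc : IsProper c)
    (hk : PartialColouring G c k) {H : Finset (Sym2 V)} {D : ℕ} (hD : ∀ v, #(edgesAt H v) ≤ D)
    (m n : ℕ) (e : Sym2 V) :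
    ∑ f ∈ edgesVia (coloured c) H e, unsatisfiedBound c m n f ≤
      4 * k * D / 2 ^ m + 4 * k ^ 2 / 2 ^ n := by
  have hnone : #{f ∈ edgesVia (coloured c) H e | c f = none} ≤ 2 * k * (2 * D) :=
    (card_filter_le _ _).trans (card_edgesVia_le (hc.card_colouredAt_le hk) hD e)
  have hsome : #{f ∈ edgesVia (coloured c) H e | c f ≠ none} ≤ 2 * k * (2 * k) := by
    have hcol (v : V) : #(edgesAt (H.filter (c · ≠ none)) v) ≤ k :=
      (card_le_card fun f hf => by
        rw [mem_edgesAt, mem_filter] at hf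
        exact mem_colouredAt.2 ⟨hf.1.2, hf.2⟩).trans (hc.card_colouredAt_le hk v)
    have hcomm : {f ∈ edgesVia (coloured c) H e | c f ≠ none} =
        edgesVia (coloured c) (H.filter (c · ≠ none)) e := by
      ext f
      simp only [mem_filter, mem_edgesVia, and_right_comm]
    rw [hcomm]
    exact card_edgesVia_le (hc.card_colouredAt_le hk) hcol e
  simp only [unsatisfiedBound, sum_ite, sum_const, nsmul_eq_mul]
  calc _ ≤ ((2 * k * (2 * D) : ℕ) : ℝ) * (1 / 2) ^ m +
        ((2 * k * (2 * k) : ℕ) : ℝ) * (1 / 2) ^ n := by gcongr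
    _ = _ := by push_cast; simp only [one_div, inv_pow]; ring

theorem IsProper.exists_forall_satisfiedP_retain (hc : IsProper c)
    (hk : PartialColouring G c k) {H : Finset (Sym2 V)} {D m n : ℕ}
    (hD : ∀ v, #(edgesAt H v) ≤ D) (hm2 : 2 ≤ m) (hn2 : 2 ≤ n)
    (hm : ∀ e ∈ H, c e = none → m ≤ #(neighbourColours G c e))
    (hn : ∀ e ∈ H, c e ≠ none → n ≤ #(neighbourColours G c e))
    (hsum : (4 * k * D / 2 ^ m + 4 * k ^ 2 / 2 ^ n : ℝ) ≤ 1 / 4) :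
    ∃ ω : Finset (Sym2 V), ∀ e ∈ H, SatisfiedP G (retain c ω) e := by
  let _ : MeasurableSpace (Finset (Sym2 V)) := ⊤
  have hreal (B : Set (Finset (Sym2 V))) : Measure.count.real B = B.ncard := by
    rw [measureReal_def, Measure.count_apply_finite B B.toFinite, ENNReal.toReal_natCast,
      Set.ncard_eq_toFinset_card]
  have hpow {l : ℕ} (hl : 2 ≤ l) : (1 / 2 : ℝ) ^ l ≤ 1 / 4 :=
    (pow_le_pow_of_le_one (by norm_num) (by norm_num) hl).trans_eq (by norm_num)
  have hind : ∀ e ∈ H, ∀ T ⊆ H, Disjoint T (edgesVia (coloured c) H e) →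
      Measure.count.real (unsatisfied G c e ∩ {ω | ∀ f ∈ T, ω ∉ unsatisfied G c f}) ≤
        unsatisfiedBound c m n e *
          Measure.count.real {ω | ∀ f ∈ T, ω ∉ unsatisfied G c f} := by
    intro e he T hTH hT
    have hfree (f) (hf : f ∈ T) (g) (hg : c g ≠ none) (hge : Touch g e) : ¬ Touch g f := fun hgf =>
      disjoint_left.1 hT hf (mem_edgesVia.2 ⟨hTH hf, g, mem_coloured.2 hg, hge, hgf⟩)
    have hbound {l : ℕ} (hl : l ≤ #(neighbourColours G c e)) :
        ((unsatisfied G c e ∩ {ω | ∀ f ∈ T, ω ∉ unsatisfied G c f}).ncard : ℝ) ≤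
          (1 / 2) ^ l * {ω | ∀ f ∈ T, ω ∉ unsatisfied G c f}.ncard := by
      have := hc.ncard_unsatisfied_inter_mul_two_pow_le hl hfree
      rw [one_div, inv_pow, inv_mul_eq_div, le_div_iff₀ (by positivity)]
      exact_mod_cast this
    rw [hreal, hreal, unsatisfiedBound]
    split
    case isTrue h => exact hbound (hm e he h)
    case isFalse h => exact hbound (hn e he h)
  obtain ⟨ω, hω⟩ := exists_forall_notMem_of_sum_le (μ := Measure.count) (A := unsatisfied G c)
    (Γ := edgesVia (coloured c) H) (p := unsatisfiedBound c m n) (s := H)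
    (fun e => by unfold unsatisfiedBound; positivity)
    (fun e _ => by unfold unsatisfiedBound; split <;> [exact hpow hm2; exact hpow hn2])
    (fun e _ => (hc.sum_unsatisfiedBound_edgesVia_le hk hD m n e).trans hsum) hind
  exact ⟨ω, fun e he => notMem_unsatisfied.1 (hω e he)⟩

end Retention

section Indexing

variable {V : Type*} [Fintype V] {G : SimpleGraph V}
  {c : Sym2 V → Option ℕ} {t k : ℕ} {e f : Sym2 V} {u v : V}

/-- A vertex is low if fewer than `t` coloured edges meet it. -/
def IsLow (c : Sym2 V → Option ℕ) (t : ℕ) (v : V) : Prop := #(colouredAt c v) < t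

/-- An edge is low if both of its ends are. -/
def IsLowEdge (c : Sym2 V → Option ℕ) (t : ℕ) (e : Sym2 V) : Prop := ∀ v ∈ e, IsLow c t v

/-- The partial colouring `c` with all low edges uncoloured. -/
noncomputable def active (c : Sym2 V → Option ℕ) (t : ℕ) : Sym2 V → Option ℕ :=
  retain c {e | ¬ IsLowEdge c t e}

theorem mem_neighbourColours_active {i : ℕ} :
    i ∈ neighbourColours G (active c t) e ↔ ∃ f ∈ EON G e, ¬ IsLowEdge c t f ∧ c f = some i := by
  simp only [mem_neighbourColours, active, retain_eq_some, Set.mem_ofPred_eq]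

variable [DecidableRel G.Adj]

theorem PartialColouring.card_colouredAt_le_degree (hc : PartialColouring G c k) (v : V) :
    #(colouredAt c v) ≤ G.degree v := by
  classical
  rw [← G.card_incidenceFinset_eq_degree v]
  refine card_le_card fun e he => ?_
  obtain ⟨hce, hve⟩ := mem_colouredAt.1 he
  obtain ⟨α, hα⟩ := Option.ne_none_iff_exists'.1 hce
  exact (G.mem_incidenceFinset v e).2 ⟨(hc e α hα).1, hve⟩

/-- Two vertices are linked if they coincide or are adjacent and both of degree less than `t`. -/
def Link (G : SimpleGraph V) [DecidableRel G.Adj] (t : ℕ) (u v : V) : Prop :=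
  u = v ∨ G.Adj u v ∧ G.degree u < t ∧ G.degree v < t

/-- Two edges conflict if some end of one is linked to some end of the other. The index of an edge
is its colour in a maximal partial colouring without conflicts. -/
def Conflict (G : SimpleGraph V) [DecidableRel G.Adj] (t : ℕ) (e f : Sym2 V) : Prop :=
  ∃ u ∈ e, ∃ v ∈ f, Link G t u v

theorem Link.symm : Link G t u v → Link G t v u :=
  Or.imp Eq.symm fun ⟨huv, hu, hv⟩ => ⟨huv.symm, hv, hu⟩

theorem Conflict.symm : Conflict G t e f → Conflict G t f e :=
  fun ⟨u, hu, v, hv, huv⟩ => ⟨v, hv, u, hu, huv.symm⟩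

theorem Touch.conflict (h : Touch e f) : Conflict G t e f :=
  let ⟨w, hwe, hwf⟩ := h; ⟨w, hwe, w, hwf, .inl rfl⟩

open Classical in
/-- The coloured edges with an end linked to `v`. -/
noncomputable def colouredNear (G : SimpleGraph V) [DecidableRel G.Adj] (t : ℕ)
    (c : Sym2 V → Option ℕ) (v : V) : Finset (Sym2 V) :=
  {f | c f ≠ none ∧ ∃ w ∈ f, Link G t v w}

theorem mem_colouredNear : f ∈ colouredNear G t c v ↔ c f ≠ none ∧ ∃ w ∈ f, Link G t v w := by
  simp [colouredNear]

theorem Link.eq_of_not_isLow (hc : PartialColouring G c k) (hv : ¬ IsLow c t v)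
    (hvu : Link G t v u) : v = u :=
  hvu.resolve_right fun h => hv ((hc.card_colouredAt_le_degree v).trans_lt h.2.1)

theorem IsLow.card_colouredNear_le (hc : PartialColouring G c k) (hv : IsLow c t v) :
    #(colouredNear G t c v) ≤ t ^ 2 := by
  classical
  let linked : Finset V := {w | Link G t v w}
  have hlinked : #linked ≤ t := by
    by_cases hdeg : G.degree v < t
    · have hsub : linked ⊆ insert v (G.neighborFinset v) := fun w hw => by
        obtain rfl | h := (mem_filter.1 hw).2 <;> simp [*]
      calc #linked ≤ G.degree v + 1 := (card_le_card hsub).trans (card_insert_le _ _)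
        _ ≤ t := hdeg
    · have hsub : linked ⊆ {v} := fun w hw => by
        obtain rfl | h := (mem_filter.1 hw).2
        · exact mem_singleton_self v
        · exact absurd h.2.1 hdeg
      calc #linked ≤ 1 := card_le_card hsub
        _ ≤ t := Nat.one_le_of_lt hv
  have hcoloured (w : V) (hw : w ∈ linked) : #(colouredAt c w) ≤ t := by
    obtain rfl | h := (mem_filter.1 hw).2
    · exact hv.le
    · exact (hc.card_colouredAt_le_degree w).trans h.2.2.le
  have hsub : colouredNear G t c v ⊆ linked.biUnion (colouredAt c) := fun f hf => by
    obtain ⟨hcf, w, hwf, hvw⟩ := mem_colouredNear.1 hf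
    exact mem_biUnion.2 ⟨w, by simpa [linked] using hvw, mem_colouredAt.2 ⟨hcf, hwf⟩⟩
  calc _ ≤ #linked * t := (card_le_card hsub).trans (card_biUnion_le_card_mul _ _ _ hcoloured)
    _ ≤ t ^ 2 := by rw [sq]; gcongr

variable (hc : IsMaximalPartialColouring G.edgeSet (Conflict G t) k c)
include hc

theorem IsMaximalPartialColouring.partialColouring : PartialColouring G c k := hc.mem_and_lt

theorem IsMaximalPartialColouring.isProper : IsProper c :=
  fun e f α hef he hf => hc.eq_of_rel e f α hef.conflict he hf

theorem IsLowEdge.ne_none (hk : 2 * t ^ 2 < k) (he : e ∈ G.edgeSet) (hlow : IsLowEdge c t e) :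
    c e ≠ none := by
  classical
  have hnear : #(e.toFinset.biUnion (colouredNear G t c)) ≤ 2 * t ^ 2 :=
    card_le_two_mul_of_forall_exists_mem (e := e) (s := colouredNear G t c) (by simp)
      fun v hv => (hlow v hv).card_colouredNear_le hc.partialColouring
  refine IsMaximalPartialColouring.ne_none hc he (fun f ⟨u, hue, w, hwf, huw⟩ hcf => ?_)
    (hnear.trans_lt hk)
  simpa using ⟨u, hue, mem_colouredNear.2 ⟨hcf, w, hwf, huw⟩⟩

theorem card_edgesAt_le_of_isLowEdge (hk : 2 * t ^ 2 < k) {L : Finset (Sym2 V)}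
    (hL : ∀ e ∈ L, e ∈ G.edgeSet ∧ IsLowEdge c t e) (v : V) : #(edgesAt L v) ≤ t := by
  obtain hempty | ⟨e, he⟩ := (edgesAt L v).eq_empty_or_nonempty
  · simp [hempty]
  obtain ⟨heL, hve⟩ := mem_edgesAt.1 he
  refine (card_le_card fun f hf => ?_).trans ((hL e heL).2 v hve).le
  obtain ⟨hfL, hvf⟩ := mem_edgesAt.1 hf
  exact mem_colouredAt.2 ⟨IsLowEdge.ne_none hc hk (hL f hfL).1 (hL f hfL).2, hvf⟩

theorem IsLowEdge.exists_mem_EON_forall_eq (hk : 2 * t ^ 2 < k) (he : e ∈ G.edgeSet)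
    (hlow : IsLowEdge c t e) (hne : (EON G e).Nonempty) :
    ∃ f ∈ EON G e, ∀ g i, c f = some i → c g = some i → Touch g e → g = f := by
  classical
  by_cases hnone : ∃ f ∈ EON G e, c f = none
  · obtain ⟨f, hf, hcf⟩ := hnone
    exact ⟨f, hf, fun g i hfi => by simp [hcf] at hfi⟩
  push Not at hnone
  have hdeg (v : V) (hv : v ∈ e) : G.degree v < t := by
    rw [← G.card_incidenceFinset_eq_degree v]
    refine (card_le_card fun f hf => ?_).trans_lt (hlow v hv)
    obtain ⟨hfG, hvf⟩ := (G.mem_incidenceFinset v f).1 hf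
    refine mem_colouredAt.2 ⟨?_, hvf⟩
    by_cases hfe : f = e
    · exact hfe ▸ hlow.ne_none hc hk he
    · exact hnone f ⟨⟨hfG, v, hvf, hv⟩, hfe⟩
  have hlink (u v : V) (hu : u ∈ e) (hv : v ∈ e) : Link G t u v := by
    refine or_iff_not_imp_left.2 fun huv => ⟨?_, hdeg u hu, hdeg v hv⟩
    rwa [(Sym2.mem_and_mem_iff huv).1 ⟨hu, hv⟩] at he
  obtain ⟨f, hf⟩ := hne
  obtain ⟨v, hvf, hve⟩ := hf.1.2
  exact ⟨f, hf, fun g i hfi hgi ⟨u, hug, hue⟩ =>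
    hc.eq_of_rel g f i ⟨u, hug, v, hvf, hlink u v hue hve⟩ hgi hfi⟩

theorem IsLowEdge.exists_retain_active_eq_none (hk : 2 * t ^ 2 < k) (he : e ∈ G.edgeSet)
    (hlow : IsLowEdge c t e) (hne : (EON G e).Nonempty) {S : Set (Sym2 V)}
    (hsat : ¬ SatisfiedP G (retain (active c t) S) e) :
    ∃ f ∈ EON G e, retain (active c t) S f = none := by
  obtain ⟨f, hf, huniq⟩ := hlow.exists_mem_EON_forall_eq hc hk he hne
  refine ⟨f, hf, by_contra fun hfS => hsat ?_⟩
  obtain ⟨i, hi⟩ := Option.ne_none_iff_exists'.1 hfS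
  have hindex {g} (hg : retain (active c t) S g = some i) : c g = some i :=
    (retain_eq_some.1 (retain_eq_some.1 hg).2).2
  exact ⟨f, hf, i, hi, fun g hg hgi => huniq g i (hindex hi) (hindex hgi) hg.2⟩

theorem mem_neighbourColours_active_or_exists_isLow (he : e ∈ G.edgeSet) (hce : c e = none)
    {i : ℕ} (hi : i < k) : i ∈ neighbourColours G (active c t) e ∨
      ∃ u ∈ e, IsLow c t u ∧ ∃ f ∈ colouredNear G t c u, c f = some i := by
  obtain ⟨f, ⟨u, hue, w, hwf, huw⟩, hfi⟩ := hc.exists_rel e he hce i hi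
  have hcf : c f ≠ none := by simp [hfi]
  by_cases hu : IsLow c t u
  · exact .inr ⟨u, hue, hu, f, mem_colouredNear.2 ⟨hcf, w, hwf, huw⟩, hfi⟩
  · obtain rfl := huw.eq_of_not_isLow hc.partialColouring hu
    refine .inl (mem_neighbourColours_active.2 ⟨f, ⟨⟨?_, u, hwf, hue⟩, ?_⟩, ?_, hfi⟩)
    · exact (hc.mem_and_lt f i hfi).1
    · rintro rfl
      exact hcf hce
    · exact fun h => hu (h u hwf)

theorem le_card_neighbourColours_active_add_sq (he : e ∈ G.edgeSet) (hlow : ¬ IsLowEdge c t e)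
    (hce : c e = none) : k ≤ #(neighbourColours G (active c t) e) + t ^ 2 := by
  classical
  obtain ⟨v, hve, hv⟩ : ∃ v ∈ e, ¬ IsLow c t v := by simpa [IsLowEdge] using hlow
  obtain ⟨F, hF, hsub⟩ : ∃ F : Finset (Sym2 V), #F ≤ t ^ 2 ∧
      ∀ u ∈ e, IsLow c t u → colouredNear G t c u ⊆ F := by
    by_cases hex : ∃ u ∈ e, IsLow c t u
    · obtain ⟨u, hue, hu⟩ := hex
      refine ⟨_, hu.card_colouredNear_le hc.partialColouring, fun u' hu'e hu' => ?_⟩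
      have hvu : v ≠ u := fun h => hv (h ▸ hu)
      rw [(Sym2.mem_and_mem_iff hvu).1 ⟨hve, hue⟩, Sym2.mem_iff] at hu'e
      obtain rfl | rfl := hu'e
      · exact absurd hu' hv
      · exact Subset.rfl
    · exact ⟨∅, by simp, fun u hue hu => absurd ⟨u, hue, hu⟩ hex⟩
  have hcover : range k ⊆ neighbourColours G (active c t) e ∪ (F.image c).eraseNone := by
    intro i hi
    obtain h | ⟨u, hue, hu, f, hf, hfi⟩ :=
      mem_neighbourColours_active_or_exists_isLow hc he hce (mem_range.1 hi)
    · exact mem_union_left _ h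
    · exact mem_union_right _ (mem_eraseNone.2 (mem_image.2 ⟨f, hsub u hue hu hf, hfi⟩))
  calc k = #(range k) := (card_range k).symm
    _ ≤ _ := (card_le_card hcover).trans (card_union_le _ _)
    _ ≤ _ := by gcongr; exact (card_eraseNone_le _).trans (card_image_le.trans hF)

theorem le_card_neighbourColours_active_add_one (hlow : ¬ IsLowEdge c t e) :
    t ≤ #(neighbourColours G (active c t) e) + 1 := by
  classical
  obtain ⟨v, hve, hv⟩ : ∃ v ∈ e, ¬ IsLow c t v := by simpa [IsLowEdge] using hlow
  have hcover : ((colouredAt c v).erase e).image c ⊆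
      (neighbourColours G (active c t) e).map Function.Embedding.some := by
    intro o ho
    obtain ⟨f, hf, rfl⟩ := mem_image.1 ho
    obtain ⟨hfe, hf⟩ := mem_erase.1 hf
    obtain ⟨hcf, hvf⟩ := mem_colouredAt.1 hf
    obtain ⟨i, hi⟩ := Option.ne_none_iff_exists'.1 hcf
    refine mem_map.2 ⟨i, ?_, hi.symm⟩
    refine mem_neighbourColours_active.2 ⟨f, ⟨⟨?_, v, hvf, hve⟩, hfe⟩, ?_, hi⟩
    · exact (hc.mem_and_lt f i hi).1
    · exact fun h => hv (h v hvf)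
  have hinj : Set.InjOn c ((colouredAt c v).erase e) :=
    (hc.isProper.injOn_colouredAt v).mono (by simp)
  calc t ≤ #(colouredAt c v) := not_lt.1 hv
    _ ≤ #((colouredAt c v).erase e) + 1 := tsub_le_iff_right.1 pred_card_le_card_erase
    _ ≤ _ := by
        rw [← card_image_of_injOn hinj]
        gcongr
        exact (card_le_card hcover).trans_eq (card_map _)

theorem exists_forall_satisfiedP_retain_active {D m n : ℕ} (hD : ∀ v, G.degree v ≤ D)
    (hm2 : 2 ≤ m) (hn2 : 2 ≤ n) (hm : m + t ^ 2 ≤ k) (hn : n + 1 ≤ t)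
    (hsum : (4 * k * D / 2 ^ m + 4 * k ^ 2 / 2 ^ n : ℝ) ≤ 1 / 4) :
    ∃ ω : Finset (Sym2 V), ∀ e ∈ G.edgeSet, ¬ IsLowEdge c t e →
      SatisfiedP G (retain (active c t) ω) e := by
  classical
  have hdeg (v : V) : #(edgesAt {e ∈ G.edgeFinset | ¬ IsLowEdge c t e} v) ≤ D := by
    refine (card_le_card fun e he => ?_).trans
      ((G.card_incidenceFinset_eq_degree v).trans_le (hD v))
    obtain ⟨he, hve⟩ := mem_edgesAt.1 he
    exact (G.mem_incidenceFinset v e).2 ⟨mem_edgeFinset.1 (mem_filter.1 he).1, hve⟩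
  have hactive {e} (hlow : ¬ IsLowEdge c t e) : active c t e = c e := by
    simp [active, retain, hlow]
  have hnone (e) (he : e ∈ G.edgeFinset.filter (¬ IsLowEdge c t ·)) (hce : active c t e = none) :
      m ≤ #(neighbourColours G (active c t) e) := by
    obtain ⟨he, hlow⟩ := mem_filter.1 he
    exact le_of_add_le_add_right <| hm.trans <| le_card_neighbourColours_active_add_sq hc
      (mem_edgeFinset.1 he) hlow ((hactive hlow).symm.trans hce)
  have hsome (e) (he : e ∈ G.edgeFinset.filter (¬ IsLowEdge c t ·)) (_ : active c t e ≠ none) :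
      n ≤ #(neighbourColours G (active c t) e) :=
    le_of_add_le_add_right <| hn.trans <|
      le_card_neighbourColours_active_add_one hc (mem_filter.1 he).2
  obtain ⟨ω, hω⟩ := (hc.isProper.retain _).exists_forall_satisfiedP_retain
    (hc.partialColouring.retain _) hdeg hm2 hn2 hnone hsome hsum
  exact ⟨ω, fun e he hlow => hω e (mem_filter.2 ⟨mem_edgeFinset.2 he, hlow⟩)⟩

end Indexing

section Combination

variable {V : Type*} {G : SimpleGraph V} {c c₁ c₂ : Sym2 V → Option ℕ} {k k₁ k₂ : ℕ} {e : Sym2 V}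

/-- The partial colouring that uses `c₁` where possible and otherwise `c₂`, with the colours of `c₂`
shifted past the `k₁` colours of `c₁`. -/
def combine (c₁ : Sym2 V → Option ℕ) (k₁ : ℕ) (c₂ : Sym2 V → Option ℕ) (e : Sym2 V) : Option ℕ :=
  c₁ e <|> (c₂ e).map (k₁ + ·)

theorem combine_eq_some_iff {i : ℕ} : combine c₁ k₁ c₂ e = some i ↔
    c₁ e = some i ∨ c₁ e = none ∧ ∃ j, c₂ e = some j ∧ k₁ + j = i := by
  simp [combine]

protected theorem PartialColouring.combine (h₁ : PartialColouring G c₁ k₁)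
    (h₂ : PartialColouring G c₂ k₂) : PartialColouring G (combine c₁ k₁ c₂) (k₁ + k₂) := by
  intro e i he
  obtain hi | ⟨-, j, hj, rfl⟩ := combine_eq_some_iff.1 he
  · exact ⟨(h₁ e i hi).1, (h₁ e i hi).2.trans_le (Nat.le_add_right ..)⟩
  · exact ⟨(h₂ e j hj).1, Nat.add_lt_add_left (h₂ e j hj).2 _⟩

theorem SatisfiedP.combine_left (h₁ : PartialColouring G c₁ k₁) (he : SatisfiedP G c₁ e) :
    SatisfiedP G (combine c₁ k₁ c₂) e := by
  obtain ⟨f, hf, i, hfi, huniq⟩ := he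
  refine ⟨f, hf, i, combine_eq_some_iff.2 (.inl hfi), fun g hg hgi => ?_⟩
  obtain hgi | ⟨-, j, -, hj⟩ := combine_eq_some_iff.1 hgi
  · exact huniq g hg hgi
  · have := (h₁ f i hfi).2
    omega

theorem SatisfiedP.combine_right (h₁ : PartialColouring G c₁ k₁)
    (hdisj : ∀ f, c₂ f ≠ none → c₁ f = none) (he : SatisfiedP G c₂ e) :
    SatisfiedP G (combine c₁ k₁ c₂) e := by
  obtain ⟨f, hf, i, hfi, huniq⟩ := he
  refine ⟨f, hf, k₁ + i, combine_eq_some_iff.2 (.inr ⟨hdisj f (by simp [hfi]), i, hfi, rfl⟩),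
    fun g hg hgi => ?_⟩
  obtain hgi | ⟨-, j, hgj, hj⟩ := combine_eq_some_iff.1 hgi
  · have := (h₁ g _ hgi).2
    omega
  · exact huniq g hg (Nat.add_left_cancel hj ▸ hgj)

theorem PartialColouring.conflictFree_getD (hc : PartialColouring G c k)
    (hsat : ∀ e ∈ G.edgeSet, (EON G e).Nonempty → SatisfiedP G c e) :
    ConflictFree G (fun e => (c e).getD k) (k + 1) := by
  refine ⟨fun e _ => ?_, fun e he hne => ?_⟩
  · change (c e).getD k < k + 1
    cases hce : c e with
    | none => exact Nat.lt_succ_self k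
    | some i => exact (hc e i hce).2.trans (Nat.lt_succ_self k)
  · obtain ⟨f, hf, i, hfi, huniq⟩ := hsat e he hne
    refine ⟨f, hf, fun g hg hgf => huniq g hg ?_⟩
    have hik := (hc f i hfi).2
    cases hcg : c g <;> simp_all

theorem ConflictFree.ocfIndex_le {c : Sym2 V → ℕ} (hc : ConflictFree G c k) :
    ocfIndex G ≤ k := by
  refine Nat.sInf_le ⟨c, hc.1, fun e he hne => ?_⟩
  obtain ⟨f, hf, huniq⟩ := hc.2 e he hne
  exact ⟨c f, f, ⟨hf, rfl⟩, fun g hg => huniq g hg.1.1 hg.2⟩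

theorem ConflictFree.ccfIndex_le {c : Sym2 V → ℕ} (hc : ConflictFree G c k) :
    ccfIndex G ≤ k := by
  refine Nat.sInf_le ⟨c, hc.1, fun e he => ?_⟩
  by_cases hne : (EON G e).Nonempty
  · obtain ⟨f, hf, huniq⟩ := hc.2 e he hne
    exact ⟨c f, f, ⟨hf.1, rfl⟩, fun g hg => huniq g hg.1 hg.2⟩
  · rw [Set.not_nonempty_iff_eq_empty, EON, Set.sdiff_eq_empty] at hne
    have hee : e ∈ ECN G e := ⟨he, e.out.1, e.out_fst_mem, e.out_fst_mem⟩
    exact ⟨c e, e, ⟨hee, rfl⟩, fun g hg => hne hg.1⟩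

end Combination

section Construction

variable {V : Type*} {G : SimpleGraph V}

/- A strong edge colouring of `L`: no two of its edges touch a common edge of `L`. -/
theorem exists_partialColouring_forall_satisfiedP [Finite V] {L : Finset (Sym2 V)}
    (hL : ↑L ⊆ G.edgeSet) {N : ℕ} (hN : ∀ v, #(edgesAt L v) ≤ N) :
    ∃ s, PartialColouring G s (4 * N ^ 2 + 1) ∧ (∀ e, s e ≠ none → e ∈ L) ∧
      ∀ e ∈ L, ∀ f ∈ L, f ∈ EON G e → SatisfiedP G s e := by
  let R (e f : Sym2 V) : Prop := ∃ g ∈ L, Touch g e ∧ Touch g f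
  have hR ⦃e f : Sym2 V⦄ : R e f → R f e := fun ⟨g, hg, hge, hgf⟩ => ⟨g, hg, hgf, hge⟩
  obtain ⟨s, hs⟩ := exists_isMaximalPartialColouring (↑L : Set (Sym2 V)) hR (4 * N ^ 2 + 1)
  have hmem (e) (he : s e ≠ none) : e ∈ L := by
    obtain ⟨i, hi⟩ := Option.ne_none_iff_exists'.1 he
    exact (hs.mem_and_lt e i hi).1
  refine ⟨s, fun e i he => ⟨hL (hs.mem_and_lt e i he).1, (hs.mem_and_lt e i he).2⟩, hmem,
    fun e he f hf hfe => ?_⟩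
  have hcard : #(edgesVia L L f) < 4 * N ^ 2 + 1 := by
    have := card_edgesVia_le hN hN f
    lia
  have hsf : s f ≠ none := hs.ne_none hf (F := edgesVia L L f)
    (fun g ⟨h, hh, hhf, hhg⟩ hg => mem_edgesVia.2 ⟨hmem g hg, h, hh, hhf, hhg⟩) hcard
  obtain ⟨i, hi⟩ := Option.ne_none_iff_exists'.1 hsf
  exact ⟨f, hfe, i, hi, fun g hg hgi =>
    hs.eq_of_rel g f i ⟨e, he, Touch.symm hg.2, Touch.symm hfe.1.2⟩ hgi hi⟩

/- An edge joining two different edges in `P` has both of its ends on edges in `L`, so it lies in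
`L`; hence no `F q` with `q ≠ p` touches `p`. -/
theorem satisfiedP_retain_image {L P : Set (Sym2 V)} {F : Sym2 V → Sym2 V}
    (hLG : L ⊆ G.edgeSet) (hL : ∀ g ∈ G.edgeSet, (∀ v ∈ g, ∃ e ∈ L, v ∈ e) → g ∈ L)
    (hP : ∀ p ∈ P, p ∈ L ∧ ∀ f ∈ EON G p, f ∉ L) (hF : ∀ p ∈ P, F p ∈ EON G p)
    {p : Sym2 V} (hp : p ∈ P) : SatisfiedP G (retain (fun _ => some 0) (F '' P)) p := by
  refine ⟨F p, hF p hp, 0, retain_eq_some.2 ⟨⟨p, hp, rfl⟩, rfl⟩, fun g hg hg0 => ?_⟩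
  obtain ⟨⟨q, hq, rfl⟩, -⟩ := retain_eq_some.1 hg0
  obtain ⟨hgG, w, hwg, hwp⟩ := hg
  obtain ⟨-, u, hug, huq⟩ := (hF q hq).1
  have hwu : w = u := by
    by_contra hne
    refine (hP q hq).2 (F q) (hF q hq) (hL _ hgG fun v hv => ?_)
    rw [(Sym2.mem_and_mem_iff hne).1 ⟨hwg, hug⟩, Sym2.mem_iff] at hv
    obtain rfl | rfl := hv
    · exact ⟨p, (hP p hp).1, hwp⟩
    · exact ⟨q, (hP q hq).1, huq⟩
  have hqp : q = p := by
    by_contra hne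
    exact (hP p hp).2 q ⟨⟨hLG (hP q hq).1, w, hwu ▸ huq, hwp⟩, hne⟩ (hP q hq).1
  rw [hqp]

theorem PartialColouring.exists_extension [Finite V] {a : Sym2 V → Option ℕ} {k N : ℕ}
    (ha : PartialColouring G a k) {L : Finset (Sym2 V)} (hLG : ↑L ⊆ G.edgeSet)
    (hN : ∀ v, #(edgesAt L v) ≤ N) (hL : ∀ g ∈ G.edgeSet, (∀ v ∈ g, ∃ e ∈ L, v ∈ e) → g ∈ L)
    (haL : ∀ e ∈ L, a e = none)
    (haux : ∀ p ∈ L, (EON G p).Nonempty → ¬ SatisfiedP G a p → ∃ f ∈ EON G p, a f = none) :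
    ∃ b, PartialColouring G b (k + (4 * N ^ 2 + 1) + 1) ∧
      (∀ e, SatisfiedP G a e → SatisfiedP G b e) ∧
      ∀ e ∈ L, (EON G e).Nonempty → SatisfiedP G b e := by
  obtain ⟨s, hs, hsL, hsat⟩ := exists_partialColouring_forall_satisfiedP hLG hN
  let P : Set (Sym2 V) :=
    {p | p ∈ L ∧ (EON G p).Nonempty ∧ (∀ f ∈ EON G p, f ∉ L) ∧ ¬ SatisfiedP G a p}
  have hauxP (p) (hp : p ∈ P) : ∃ f ∈ EON G p, a f = none := haux p hp.1 hp.2.1 hp.2.2.2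
  choose! F hF haF using hauxP
  have has : PartialColouring G (combine a k s) (k + (4 * N ^ 2 + 1)) := ha.combine hs
  have hd : PartialColouring G (retain (fun _ => some 0) (F '' P)) 1 := by
    intro e i he
    obtain ⟨⟨p, hp, rfl⟩, h0⟩ := retain_eq_some.1 he
    exact ⟨(hF p hp).1.1, by simp_all⟩
  have hdisj (f) (hf : retain (fun _ => some 0) (F '' P) f ≠ none) : combine a k s f = none := by
    obtain ⟨i, hi⟩ := Option.ne_none_iff_exists'.1 hf
    obtain ⟨⟨p, hp, rfl⟩, -⟩ := retain_eq_some.1 hi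
    have hsF : s (F p) = none := by
      by_contra h
      exact hp.2.2.1 _ (hF p hp) (hsL _ h)
    simp [combine, haF p hp, hsF]
  refine ⟨_, has.combine hd, fun e he => (he.combine_left ha).combine_left has, fun e he hne => ?_⟩
  by_cases hsate : SatisfiedP G a e
  · exact (hsate.combine_left ha).combine_left has
  by_cases hiso : ∀ f ∈ EON G e, f ∉ L
  · have heP : e ∈ P := ⟨he, hne, hiso, hsate⟩
    exact (satisfiedP_retain_image hLG hL (fun p hp => ⟨hp.1, hp.2.2.1⟩) hF heP).combine_right has
      hdisj
  · push Not at hiso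
    obtain ⟨f, hfe, hfL⟩ := hiso
    exact ((hsat e he f hfL hfe).combine_right ha fun f hf => haL f (hsL f hf)).combine_left has

theorem exists_conflictFree_of_degree_le [Fintype V] [DecidableRel G.Adj] {D t k m n : ℕ}
    (hD : ∀ v, G.degree v ≤ D) (hk : 2 * t ^ 2 < k) (hm2 : 2 ≤ m) (hn2 : 2 ≤ n)
    (hm : m + t ^ 2 ≤ k) (hn : n + 1 ≤ t)
    (hsum : (4 * k * D / 2 ^ m + 4 * k ^ 2 / 2 ^ n : ℝ) ≤ 1 / 4) :
    ∃ col, ConflictFree G col (k + (4 * t ^ 2 + 1) + 1 + 1) := by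
  classical
  obtain ⟨c, hc⟩ := exists_isMaximalPartialColouring G.edgeSet
    (fun e f => Conflict.symm (G := G) (t := t) (e := e) (f := f)) k
  obtain ⟨ω, hω⟩ := exists_forall_satisfiedP_retain_active hc hD hm2 hn2 hm hn hsum
  let L : Finset (Sym2 V) := {e ∈ G.edgeFinset | IsLowEdge c t e}
  have hmemL {e} : e ∈ L ↔ e ∈ G.edgeSet ∧ IsLowEdge c t e := by simp [L]
  have hL (g) (hg : g ∈ G.edgeSet) (h : ∀ v ∈ g, ∃ e ∈ L, v ∈ e) : g ∈ L :=
    hmemL.2 ⟨hg, fun v hv => let ⟨e, he, hve⟩ := h v hv; (hmemL.1 he).2 v hve⟩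
  have haL (e) (he : e ∈ L) : retain (active c t) ω e = none := by
    simp [active, retain, (hmemL.1 he).2]
  obtain ⟨b, hb, hab, hbL⟩ := ((hc.partialColouring.retain _).retain _).exists_extension
    (fun e he => (hmemL.1 he).1) (card_edgesAt_le_of_isLowEdge hc hk fun e => hmemL.1) hL haL
    fun p hp hne =>
      IsLowEdge.exists_retain_active_eq_none hc hk (hmemL.1 hp).1 (hmemL.1 hp).2 hne
  refine ⟨_, hb.conflictFree_getD fun e he hne => ?_⟩
  by_cases hlow : IsLowEdge c t e
  · exact hbL e (hmemL.2 ⟨he, hlow⟩) hne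
  · exact hab e (hω e he hlow)

end Construction

section Asymptotics

theorem four_mul_div_two_pow_add_four_mul_sq_div_two_pow_le {L k n : ℕ} (hL : 1 ≤ L)
    (hk : k ≤ 2 * L) (hLn : 128 * L ^ 2 ≤ 2 ^ n) :
    (4 * k * (2 ^ L : ℕ) / 2 ^ (L + (n + 1)) + 4 * k ^ 2 / 2 ^ n : ℝ) ≤ 1 / 4 := by
  have hcancel : (4 * k * (2 ^ L : ℕ) / 2 ^ (L + (n + 1)) + 4 * k ^ 2 / 2 ^ n : ℝ) =
      (2 * k + 4 * k ^ 2 : ℕ) / 2 ^ n := by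
    push_cast
    field_simp
    ring
  have hnum : 4 * (2 * k + 4 * k ^ 2) ≤ 2 ^ n :=
    calc 4 * (2 * k + 4 * k ^ 2) ≤ 4 * (2 * (2 * L) + 4 * (2 * L) ^ 2) := by gcongr
      _ ≤ 128 * L ^ 2 := by nlinarith
      _ ≤ 2 ^ n := hLn
  rw [hcancel, div_le_div_iff₀ (by positivity) (by norm_num)]
  exact_mod_cast (mul_comm _ _).trans_le (hnum.trans_eq (one_mul _).symm)

theorem exists_conflictFree_of_degree_le_two_pow {V : Type*} [Fintype V] {G : SimpleGraph V}
    [DecidableRel G.Adj] {L t : ℕ} (hdeg : ∀ v, G.degree v ≤ 2 ^ L) (ht : 3 ≤ t)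
    (htL : t ^ 2 + t ≤ L) (hLt : 256 * L ^ 2 ≤ 2 ^ t) :
    ∃ col, ConflictFree G col (L + 5 * t ^ 2 + t + 3) := by
  obtain ⟨n, rfl⟩ : ∃ n, t = n + 1 := ⟨t - 1, by omega⟩
  obtain ⟨col, hcol⟩ := exists_conflictFree_of_degree_le hdeg (t := n + 1) (n := n)
    (m := L + (n + 1)) (k := L + (n + 1) ^ 2 + (n + 1))
    (by omega) (by omega) (by omega) (by omega) le_rfl
    (four_mul_div_two_pow_add_four_mul_sq_div_two_pow_le (by omega) (by omega)
      (by rw [pow_succ 2] at hLt; omega))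
  exact ⟨col, by convert hcol using 1; ring⟩

theorem mul_sq_le_two_pow_two_mul_log_add (L : ℕ) :
    256 * L ^ 2 ≤ 2 ^ (2 * Nat.log 2 L + 10) := by
  have hL : L ≤ 2 * 2 ^ Nat.log 2 L := by
    rw [← pow_succ']
    exact (Nat.lt_pow_succ_log_self one_lt_two L).le
  calc 256 * L ^ 2 ≤ 256 * (2 * 2 ^ Nat.log 2 L) ^ 2 := by gcongr
    _ = 2 ^ (2 * Nat.log 2 L + 10) := by ring

theorem natLog_two_le_logb (n : ℕ) : (Nat.log 2 n : ℝ) ≤ Real.logb 2 n := by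
  obtain rfl | hn := n.eq_zero_or_pos
  · simp
  have hfloor := Nat.floor_le (Real.logb_nonneg one_lt_two (Nat.one_le_cast.2 hn))
  rwa [← Nat.cast_ofNat, Real.natFloor_logb_natCast] at hfloor

theorem natLog_two_le_two_mul_log (n : ℕ) : (Nat.log 2 n : ℝ) ≤ 2 * Real.log n :=
  calc (Nat.log 2 n : ℝ) ≤ Real.log n / Real.log 2 := natLog_two_le_logb n
    _ ≤ 2 * Real.log n := by
      rw [div_le_iff₀ (Real.log_pos one_lt_two)]
      nlinarith [Real.log_two_gt_d9, Real.log_natCast_nonneg n]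

theorem eventually_mul_sq_log_le {C : ℝ} (hC : 0 < C) :
    ∀ᶠ L : ℕ in .atTop, C * (2 * Nat.log 2 L + 10 : ℕ) ^ 2 ≤ L := by
  have hlog := Real.tendsto_log_atTop.comp (tendsto_natCast_atTop_atTop (R := ℝ))
  have hlittle := (Real.isLittleO_pow_log_id_atTop (n := 2)).comp_tendsto
    (tendsto_natCast_atTop_atTop (R := ℝ))
  filter_upwards [hlog.eventually_ge_atTop 10,
    hlittle.bound (c := (25 * C)⁻¹) (by positivity)] with L hL hbound
  have hbound : Real.log L ^ 2 ≤ (25 * C)⁻¹ * L := by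
    simpa only [Function.comp_apply, id_eq, norm_pow, Real.norm_eq_abs, sq_abs,
      Nat.abs_cast] using hbound
  have hlin : ((2 * Nat.log 2 L + 10 : ℕ) : ℝ) ≤ 5 * Real.log L := by
    have hL : 10 ≤ Real.log L := hL
    push_cast
    linarith [natLog_two_le_two_mul_log L]
  calc C * (2 * Nat.log 2 L + 10 : ℕ) ^ 2 ≤ C * (5 * Real.log L) ^ 2 := by gcongr
    _ = 25 * C * Real.log L ^ 2 := by ring
    _ ≤ 25 * C * ((25 * C)⁻¹ * L) := by gcongr
    _ = L := mul_inv_cancel_left₀ (by positivity) _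

end Asymptotics

theorem stmt13_general.{u} (ε : ℝ) (hε : 0 < ε) :
    ∃ Δε : ℕ, ∀ (V : Type u) [Fintype V] (G : SimpleGraph V) [DecidableRel G.Adj],
      Δε ≤ G.maxDegree → ∃ col k, ConflictFree G col k ∧
        (k : ℝ) ≤ (1 + ε) * Real.logb 2 (G.maxDegree : ℝ) := by
  obtain ⟨L₀, hL₀⟩ := Filter.eventually_atTop.1 <| (eventually_mul_sq_log_le two_pos).and <|
    eventually_mul_sq_log_le (C := (10 + ε) / ε) (by positivity)
  refine ⟨2 ^ L₀, fun V _ G _ hΔ => ?_⟩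
  set l := Nat.log 2 G.maxDegree
  set t := 2 * Nat.log 2 (l + 1) + 10
  have hl : L₀ ≤ l + 1 := (Nat.le_log_of_pow_le one_lt_two hΔ).trans l.le_succ
  obtain ⟨htwo, hε'⟩ : 2 * (t : ℝ) ^ 2 ≤ (l + 1 : ℕ) ∧ (10 + ε) / ε * (t : ℝ) ^ 2 ≤ (l + 1 : ℕ) :=
    hL₀ (l + 1) hl
  have htwo : 2 * t ^ 2 ≤ l + 1 := by exact_mod_cast htwo
  have ht : 10 ≤ t := Nat.le_add_left ..
  obtain ⟨col, hcol⟩ := exists_conflictFree_of_degree_le_two_pow (t := t)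
    (fun v => (G.degree_le_maxDegree v).trans (Nat.lt_pow_succ_log_self one_lt_two _).le)
    (by omega) (by nlinarith) (mul_sq_le_two_pow_two_mul_log_add (l + 1))
  refine ⟨col, _, hcol, ?_⟩
  have ht9 : l + 1 + 5 * t ^ 2 + t + 3 ≤ l + 9 * t ^ 2 := by nlinarith
  rw [div_mul_eq_mul_div, div_le_iff₀ hε] at hε'
  calc ((l + 1 + 5 * t ^ 2 + t + 3 : ℕ) : ℝ) ≤ l + 9 * t ^ 2 := by exact_mod_cast ht9
    _ ≤ (1 + ε) * l := by
      have hpos : (100 : ℝ) ≤ t ^ 2 := by exact_mod_cast Nat.pow_le_pow_left ht 2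
      rw [Nat.cast_succ l] at hε'
      nlinarith
    _ ≤ _ := by gcongr; exact natLog_two_le_logb _

theorem stmt13 (ε : ℝ) (hε : 0 < ε) :
    ∃ Δε : ℕ, ∀ (V : Type) [Fintype V] (G : SimpleGraph V) [DecidableRel G.Adj],
      1 < G.maxDegree → Δε ≤ G.maxDegree →
      (ccfIndex G : ℝ) ≤ (1 + ε) * Real.logb 2 (G.maxDegree : ℝ) ∧
      (ocfIndex G : ℝ) ≤ (1 + ε) * Real.logb 2 (G.maxDegree : ℝ) := by
  obtain ⟨Δε, h⟩ := stmt13_general ε hε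
  refine ⟨Δε, fun V _ G _ _ hΔ => ?_⟩
  obtain ⟨col, k, hcol, hk⟩ := h V G hΔ
  exact ⟨(Nat.cast_le.2 hcol.ccfIndex_le).trans hk, (Nat.cast_le.2 hcol.ocfIndex_le).trans hk⟩
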